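/- arXiv:2302.06563 — 7 statements merged into one kernel-verified Lean document; each statement's English description precedes it below -/
import Mathlib

section
/- Let X and Y be binary words with equal Hamming weight w = w_H(X) = w_H(Y). Then the transformation of X into Y by single 0-deletions and 0-insertions is possible in finitely many steps, and d_id(X,Y) = Σ_{i=1}^{w+1} |v_i(X) − v_i(Y)|, i.e. d_id(X,Y) equals the symmetric L1 distance between the run-length vectors V(X) and V(Y). -/
/-!
Deleting or inserting a `0` changes exactly one run length, by one (`runLengths_insert`), so a
chain of `k` steps moves the run-length vector by at most `k` in `L₁` distance
(`listL1_le_of_zeroChain`). Conversely, for words of equal weight, adjusting the runs of `0`'s one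
unit at a time gives a chain whose length is exactly the `L₁` distance (`zeroChain_listL1`).
-/

/-- `Y` is obtained from `X` by deleting one occurrence of the symbol `0`
(represented by `false`). -/
def ZeroDel (X Y : List Bool) : Prop :=
  ∃ A B : List Bool, X = A ++ false :: B ∧ Y = A ++ B

/-- One elementary step: deletion or insertion of a single `0`. -/
def ZeroStep (X Y : List Bool) : Prop := ZeroDel X Y ∨ ZeroDel Y X

/-- `ZeroChain k X Y` : `Y` is obtained from `X` by exactly `k` elementary steps. -/
def ZeroChain : ℕ → List Bool → List Bool → Prop
  | 0, X, Y => X = Y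
  | k + 1, X, Y => ∃ Z, ZeroStep X Z ∧ ZeroChain k Z Y

/-- The deletion/insertion-of-`0`'s distance `d_id`, valued in `ℕ∞`
(`⊤` when no finite sequence of steps transforms `X` into `Y`). -/
noncomputable def dId (X Y : List Bool) : ℕ∞ :=
  sInf {n : ℕ∞ | ∃ k : ℕ, n = k ∧ ZeroChain k X Y}

/-- The run-length map `V` : the list `(v₁, …, v_{w+1})` of lengths of the maximal
runs of `0`'s of a binary word, delimited by its `1`'s. -/
def runLengths : List Bool → List ℕ
  | [] => [0]
  | false :: r =>
    match runLengths r with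
    | [] => [1]
    | v :: vs => (v + 1) :: vs
  | true :: r => 0 :: runLengths r

/-- symmetric `L₁` distance between two lists of naturals (of equal length) -/
def listL1 (u v : List ℕ) : ℕ := (List.zipWith (fun a b => (a - b) + (b - a)) u v).sum

theorem runLengths_ne_nil : ∀ X : List Bool, ∃ v vs, runLengths X = v :: vs
  | [] => ⟨0, [], rfl⟩
  | true :: r => ⟨0, runLengths r, rfl⟩
  | false :: r => by
    obtain ⟨v, vs, hv⟩ := runLengths_ne_nil r
    exact ⟨v + 1, vs, by simp [runLengths, hv]⟩

theorem runLengths_false {r : List Bool} {v : ℕ} {vs : List ℕ} (h : runLengths r = v :: vs) :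
    runLengths (false :: r) = (v + 1) :: vs := by
  simp [runLengths, h]

theorem listL1_cons (a b : ℕ) (u v : List ℕ) :
    listL1 (a :: u) (b :: v) = (a - b) + (b - a) + listL1 u v := by
  simp [listL1]

/-- Inserting a `0` increments exactly one entry of the run-length vector. -/
theorem runLengths_insert (A B : List Bool) :
    ∃ p x q, runLengths (A ++ B) = p ++ x :: q ∧
      runLengths (A ++ false :: B) = p ++ (x + 1) :: q := by
  induction A with
  | nil =>
    obtain ⟨v, vs, hv⟩ := runLengths_ne_nil B
    exact ⟨[], v, vs, hv, runLengths_false hv⟩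
  | cons c A ih =>
    obtain ⟨p, x, q, h1, h2⟩ := ih
    cases c with
    | true => exact ⟨0 :: p, x, q, by simp [runLengths, h1], by simp [runLengths, h2]⟩
    | false =>
      cases p with
      | nil => exact ⟨[], x + 1, q, runLengths_false h1, runLengths_false h2⟩
      | cons y p => exact ⟨(y + 1) :: p, x, q, runLengths_false h1, runLengths_false h2⟩

/-- No equality of lengths is needed: `List.zipWith` truncates both sides alike. -/
theorem listL1_increment (p : List ℕ) (x : ℕ) (q v : List ℕ) :
    listL1 (p ++ (x + 1) :: q) v ≤ listL1 (p ++ x :: q) v + 1 ∧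
      listL1 (p ++ x :: q) v ≤ listL1 (p ++ (x + 1) :: q) v + 1 := by
  induction p generalizing v with
  | nil =>
    cases v with
    | nil => simp [listL1]
    | cons b v => simp only [List.nil_append, listL1_cons]; omega
  | cons a p ih =>
    cases v with
    | nil => simp [listL1]
    | cons b v =>
      have := ih v
      simp only [List.cons_append, listL1_cons]; omega

theorem listL1_le_of_zeroStep {X Z : List Bool} (h : ZeroStep X Z) (v : List ℕ) :
    listL1 (runLengths X) v ≤ listL1 (runLengths Z) v + 1 := by
  rcases h with ⟨A, B, rfl, rfl⟩ | ⟨A, B, rfl, rfl⟩ <;>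
    obtain ⟨p, x, q, h1, h2⟩ := runLengths_insert A B <;> rw [h1, h2]
  · exact (listL1_increment p x q v).1
  · exact (listL1_increment p x q v).2

theorem listL1_self (u : List ℕ) : listL1 u u = 0 := by
  induction u with
  | nil => rfl
  | cons a u ih => simp [listL1_cons, ih]

theorem listL1_le_of_zeroChain {k : ℕ} {X Y : List Bool} (h : ZeroChain k X Y) :
    listL1 (runLengths X) (runLengths Y) ≤ k := by
  induction k generalizing X with
  | zero =>
    cases h
    exact (listL1_self _).le
  | succ k ih =>
    obtain ⟨Z, hs, hc⟩ := h
    have h1 := listL1_le_of_zeroStep hs (runLengths Y)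
    have h2 := ih hc
    omega

theorem ZeroDel.cons {X Y : List Bool} (c : Bool) (h : ZeroDel X Y) :
    ZeroDel (c :: X) (c :: Y) := by
  obtain ⟨A, B, rfl, rfl⟩ := h
  exact ⟨c :: A, B, rfl, rfl⟩

theorem ZeroChain.cons {k : ℕ} {X Y : List Bool} (c : Bool) (h : ZeroChain k X Y) :
    ZeroChain k (c :: X) (c :: Y) := by
  induction k generalizing X with
  | zero => exact congrArg (c :: ·) h
  | succ k ih =>
    obtain ⟨Z, hs, hc⟩ := h
    exact ⟨c :: Z, hs.imp (ZeroDel.cons c) (ZeroDel.cons c), ih hc⟩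

theorem ZeroChain.snoc {k : ℕ} {X Y Z : List Bool} (h : ZeroChain k X Y) (hs : ZeroStep Y Z) :
    ZeroChain (k + 1) X Z := by
  induction k generalizing X with
  | zero =>
    cases h
    exact ⟨Z, hs, rfl⟩
  | succ k ih =>
    obtain ⟨W, hw, hc⟩ := h
    exact ⟨W, hw, ih hc⟩

theorem zeroDel_head (X : List Bool) : ZeroDel (false :: X) X := ⟨[], X, rfl, rfl⟩

/-- If `Y` starts with an empty run, deleting a leading `0` of `X` lowers the distance by one. -/
theorem listL1_false_left {X Y : List Bool} {vs : List ℕ} (hY : runLengths Y = 0 :: vs) :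
    listL1 (runLengths (false :: X)) (runLengths Y) =
      listL1 (runLengths X) (runLengths Y) + 1 := by
  obtain ⟨u, us, hu⟩ := runLengths_ne_nil X
  rw [runLengths_false hu, hu, hY, listL1_cons, listL1_cons]; omega

theorem listL1_false_right {X Y : List Bool} {us : List ℕ} (hX : runLengths X = 0 :: us) :
    listL1 (runLengths X) (runLengths (false :: Y)) =
      listL1 (runLengths X) (runLengths Y) + 1 := by
  obtain ⟨v, vs, hv⟩ := runLengths_ne_nil Y
  rw [runLengths_false hv, hv, hX, listL1_cons, listL1_cons]; omega

theorem listL1_false_false (X Y : List Bool) :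
    listL1 (runLengths (false :: X)) (runLengths (false :: Y)) =
      listL1 (runLengths X) (runLengths Y) := by
  obtain ⟨u, us, hu⟩ := runLengths_ne_nil X
  obtain ⟨v, vs, hv⟩ := runLengths_ne_nil Y
  rw [runLengths_false hu, runLengths_false hv, hu, hv, listL1_cons, listL1_cons]; omega

/-- Words of equal weight are joined by a chain realizing the `L₁` distance: equal first letters
are kept, and a leading `0` facing a `1` or the end of the other word is deleted or inserted. -/
theorem zeroChain_listL1 : ∀ X Y : List Bool, X.count true = Y.count true →
    ZeroChain (listL1 (runLengths X) (runLengths Y)) X Y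
  | [], [], _ => rfl
  | [], true :: Y, h => by simp at h
  | true :: X, [], h => by simp at h
  | true :: X, true :: Y, h => by
    have := (zeroChain_listL1 X Y (by simpa using h)).cons true
    simpa [runLengths, listL1_cons] using this
  | false :: X, false :: Y, h => by
    rw [listL1_false_false]
    exact (zeroChain_listL1 X Y (by simpa using h)).cons false
  | false :: X, [], h => by
    rw [listL1_false_left (vs := []) rfl]
    exact ⟨X, .inl (zeroDel_head X), zeroChain_listL1 X [] (by simpa using h)⟩
  | false :: X, true :: Y, h => by
    rw [listL1_false_left (vs := runLengths Y) rfl]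
    exact ⟨X, .inl (zeroDel_head X), zeroChain_listL1 X (true :: Y) (by simpa using h)⟩
  | [], false :: Y, h => by
    rw [listL1_false_right (us := []) rfl]
    exact (zeroChain_listL1 [] Y (by simpa using h)).snoc (.inr (zeroDel_head Y))
  | true :: X, false :: Y, h => by
    rw [listL1_false_right (us := runLengths X) rfl]
    exact (zeroChain_listL1 (true :: X) Y (by simpa using h)).snoc (.inr (zeroDel_head Y))
termination_by X Y => X.length + Y.length

/-- If two binary words have the same Hamming weight `w`, then one can be transformed
into the other by finitely many single `0`-deletions/`0`-insertions, and the distance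
`d_id(X,Y)` equals `Σ_{i=1}^{w+1} |vᵢ(X) - vᵢ(Y)|`, the symmetric `L₁` distance between
the run-length vectors `V(X)` and `V(Y)`. -/
theorem dId_eq_listL1_runLengths (X Y : List Bool)
    (h : X.count true = Y.count true) :
    dId X Y ≠ ⊤ ∧ dId X Y = (listL1 (runLengths X) (runLengths Y) : ℕ∞) := by
  have key : dId X Y = (listL1 (runLengths X) (runLengths Y) : ℕ∞) := by
    apply le_antisymm
    · exact sInf_le ⟨_, rfl, zeroChain_listL1 X Y h⟩
    · refine le_sInf ?_
      rintro _ ⟨k, rfl, hk⟩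
      exact_mod_cast listL1_le_of_zeroChain hk
  exact ⟨key ▸ ENat.natCast_ne_top _, key⟩
end

section
/- Let X₁, X₂, Y₁, Y₂ be binary words with w_H(X₁) = w_H(Y₁). Then d_id(X₁ 1 X₂, Y₁ 1 Y₂) = d_id(X₁ 1, Y₁ 1) + d_id(X₂, Y₂) = d_id(X₁, Y₁) + d_id(X₂, Y₂), where X₁ 1 X₂ denotes the concatenation of X₁, the single symbol 1, and X₂, and the equalities are taken in ℕ ∪ {∞}. -/
lemma ZeroDel.append_right {X Y : List Bool} (h : ZeroDel X Y) (C : List Bool) :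
    ZeroDel (X ++ C) (Y ++ C) := by
  obtain ⟨A, B, rfl, rfl⟩ := h
  exact ⟨A, B ++ C, by simp, by simp⟩

lemma ZeroDel.append_left {X Y : List Bool} (h : ZeroDel X Y) (C : List Bool) :
    ZeroDel (C ++ X) (C ++ Y) := by
  obtain ⟨A, B, rfl, rfl⟩ := h
  exact ⟨C ++ A, B, by simp, by simp⟩

lemma ZeroStep.append_right {X Y : List Bool} (h : ZeroStep X Y) (C : List Bool) :
    ZeroStep (X ++ C) (Y ++ C) :=
  h.imp (·.append_right C) (·.append_right C)

lemma ZeroStep.append_left {X Y : List Bool} (h : ZeroStep X Y) (C : List Bool) :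
    ZeroStep (C ++ X) (C ++ Y) :=
  h.imp (·.append_left C) (·.append_left C)

lemma ZeroDel.count_true {X Y : List Bool} (h : ZeroDel X Y) : X.count true = Y.count true := by
  obtain ⟨A, B, rfl, rfl⟩ := h
  simp

lemma ZeroStep.count_true {X Y : List Bool} (h : ZeroStep X Y) : X.count true = Y.count true :=
  h.elim (·.count_true) (·.count_true.symm)

lemma ZeroChain.append_right {k : ℕ} {X Y : List Bool} (h : ZeroChain k X Y) (C : List Bool) :
    ZeroChain k (X ++ C) (Y ++ C) := by
  induction k generalizing X with
  | zero => exact congrArg (· ++ C) h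
  | succ k ih =>
    obtain ⟨Z, hs, hc⟩ := h
    exact ⟨Z ++ C, hs.append_right C, ih hc⟩

lemma ZeroChain.append_left {k : ℕ} {X Y : List Bool} (h : ZeroChain k X Y) (C : List Bool) :
    ZeroChain k (C ++ X) (C ++ Y) := by
  induction k generalizing X with
  | zero => exact congrArg (C ++ ·) h
  | succ k ih =>
    obtain ⟨Z, hs, hc⟩ := h
    exact ⟨C ++ Z, hs.append_left C, ih hc⟩

lemma ZeroChain.trans {i j : ℕ} {X Y Z : List Bool} (h₁ : ZeroChain i X Y)
    (h₂ : ZeroChain j Y Z) : ZeroChain (i + j) X Z := by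
  induction i generalizing X with
  | zero =>
    cases h₁
    simpa using h₂
  | succ i ih =>
    obtain ⟨W, hs, hc⟩ := h₁
    rw [Nat.succ_add]
    exact ⟨W, hs, ih hc⟩

lemma ZeroChain.count_true {k : ℕ} {X Y : List Bool} (h : ZeroChain k X Y) :
    X.count true = Y.count true := by
  induction k generalizing X with
  | zero => exact congrArg (List.count true) h
  | succ k ih =>
    obtain ⟨Z, hs, hc⟩ := h
    exact hs.count_true.trans (ih hc)

/-- A step from `X₁ 1 X₂` keeps the `1` and changes exactly one of the two sides. -/
lemma ZeroStep.split {X₁ X₂ Z : List Bool} (h : ZeroStep (X₁ ++ true :: X₂) Z) :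
    ∃ Z₁ Z₂, Z = Z₁ ++ true :: Z₂ ∧
      ((ZeroStep X₁ Z₁ ∧ X₂ = Z₂) ∨ (X₁ = Z₁ ∧ ZeroStep X₂ Z₂)) := by
  rcases h with ⟨A, B, hX, rfl⟩ | ⟨A, B, rfl, hX⟩
  · rcases List.append_eq_append_iff.1 hX with ⟨C, rfl, hC⟩ | ⟨C, rfl, hC⟩
    · -- The deleted `0` lies to the right of the `1`.
      cases C with
      | nil => simp at hC
      | cons c C =>
        obtain ⟨rfl, rfl⟩ := List.cons_eq_cons.1 hC
        exact ⟨X₁, C ++ B, by simp, .inr ⟨rfl, .inl ⟨C, B, rfl, rfl⟩⟩⟩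
    · -- The deleted `0` lies to the left of the `1`.
      cases C with
      | nil => simp at hC
      | cons c C =>
        obtain ⟨rfl, rfl⟩ := List.cons_eq_cons.1 hC
        exact ⟨A ++ C, X₂, by simp, .inl ⟨.inl ⟨A, C, rfl, rfl⟩, rfl⟩⟩
  · rcases List.append_eq_append_iff.1 hX with ⟨C, rfl, hC⟩ | ⟨C, rfl, rfl⟩
    · cases C with
      | nil =>
        -- The `0` is inserted directly before the `1`: it counts as part of the left side.
        obtain rfl : true :: X₂ = B := hC
        exact ⟨X₁ ++ [false], X₂, by simp, .inl ⟨.inr ⟨X₁, [], by simp, by simp⟩, rfl⟩⟩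
      | cons c C =>
        obtain ⟨rfl, rfl⟩ := List.cons_eq_cons.1 hC
        exact ⟨X₁, C ++ false :: B, by simp, .inr ⟨rfl, .inr ⟨C, B, rfl, rfl⟩⟩⟩
    · exact ⟨A ++ false :: C, X₂, by simp, .inl ⟨.inr ⟨A, C, rfl, rfl⟩, rfl⟩⟩

/-- A chain from `X₁ 1 X₂` decomposes into independent chains on the two sides of the `1`. -/
lemma ZeroChain.split {k : ℕ} {X₁ X₂ W : List Bool} (h : ZeroChain k (X₁ ++ true :: X₂) W) :
    ∃ W₁ W₂ i j, W = W₁ ++ true :: W₂ ∧ i + j = k ∧ ZeroChain i X₁ W₁ ∧ ZeroChain j X₂ W₂ := by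
  induction k generalizing X₁ X₂ with
  | zero => exact ⟨X₁, X₂, 0, 0, h.symm, rfl, rfl, rfl⟩
  | succ k ih =>
    obtain ⟨Z, hs, hc⟩ := h
    obtain ⟨Z₁, Z₂, rfl, ⟨hs₁, rfl⟩ | ⟨rfl, hs₂⟩⟩ := hs.split
    · obtain ⟨W₁, W₂, i, j, rfl, rfl, hi, hj⟩ := ih hc
      exact ⟨W₁, W₂, i + 1, j, rfl, by omega, ⟨Z₁, hs₁, hi⟩, hj⟩
    · obtain ⟨W₁, W₂, i, j, rfl, rfl, hi, hj⟩ := ih hc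
      exact ⟨W₁, W₂, i, j + 1, rfl, by omega, hi, ⟨Z₂, hs₂, hj⟩⟩

/-- An occurrence of `1` in a word is determined by the number of `1`'s preceding it. -/
lemma append_true_inj {A B C D : List Bool} (h : A ++ true :: B = C ++ true :: D)
    (hc : A.count true = C.count true) : A = C ∧ B = D := by
  rcases List.append_eq_append_iff.1 h with ⟨E, rfl, hE⟩ | ⟨E, rfl, hE⟩ <;>
  · cases E with
    | nil => simp_all
    | cons e E =>
      obtain ⟨rfl, rfl⟩ := List.cons_eq_cons.1 hE
      simp at hc

lemma dId_le {k : ℕ} {X Y : List Bool} (h : ZeroChain k X Y) : dId X Y ≤ k :=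
  sInf_le ⟨k, rfl, h⟩

lemma exists_zeroChain_of_dId_ne_top {X Y : List Bool} (h : dId X Y ≠ ⊤) :
    ∃ k : ℕ, dId X Y = k ∧ ZeroChain k X Y := by
  have hne : {n : ℕ∞ | ∃ k : ℕ, n = k ∧ ZeroChain k X Y}.Nonempty := by
    by_contra hempty
    rw [Set.not_nonempty_iff_eq_empty] at hempty
    exact h (by rw [dId, hempty, sInf_empty])
  exact csInf_mem hne

lemma dId_self (X : List Bool) : dId X X = 0 :=
  nonpos_iff_eq_zero.1 (dId_le (k := 0) rfl)

lemma dId_append_true_cons (X₁ X₂ Y₁ Y₂ : List Bool) (h : X₁.count true = Y₁.count true) :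
    dId (X₁ ++ true :: X₂) (Y₁ ++ true :: Y₂) = dId X₁ Y₁ + dId X₂ Y₂ := by
  apply le_antisymm
  · by_cases h₁ : dId X₁ Y₁ = ⊤
    · simp [h₁]
    by_cases h₂ : dId X₂ Y₂ = ⊤
    · simp [h₂]
    obtain ⟨i, hi, ci⟩ := exists_zeroChain_of_dId_ne_top h₁
    obtain ⟨j, hj, cj⟩ := exists_zeroChain_of_dId_ne_top h₂
    rw [hi, hj, ← Nat.cast_add]
    refine dId_le ((ci.append_right (true :: X₂)).trans ?_)
    simpa using cj.append_left (Y₁ ++ [true])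
  · refine le_sInf ?_
    rintro _ ⟨k, rfl, hk⟩
    obtain ⟨W₁, W₂, i, j, hW, rfl, hi, hj⟩ := hk.split
    obtain ⟨rfl, rfl⟩ := append_true_inj hW (h.symm.trans hi.count_true)
    rw [Nat.cast_add]
    exact add_le_add (dId_le hi) (dId_le hj)

/-- Concatenation additivity across a separating `1`: if `w_H(X₁) = w_H(Y₁)` then
`d_id(X₁1X₂, Y₁1Y₂) = d_id(X₁1, Y₁1) + d_id(X₂,Y₂) = d_id(X₁,Y₁) + d_id(X₂,Y₂)`. -/
theorem dId_append_one (X₁ X₂ Y₁ Y₂ : List Bool)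
    (h : X₁.count true = Y₁.count true) :
    dId (X₁ ++ true :: X₂) (Y₁ ++ true :: Y₂) =
        dId (X₁ ++ [true]) (Y₁ ++ [true]) + dId X₂ Y₂ ∧
    dId (X₁ ++ true :: X₂) (Y₁ ++ true :: Y₂) = dId X₁ Y₁ + dId X₂ Y₂ := by
  have key := dId_append_true_cons X₁ X₂ Y₁ Y₂ h
  refine ⟨?_, key⟩
  rw [key, dId_append_true_cons X₁ [] Y₁ [] h, dId_self, add_zero]
end

section
/- Let F be a field, a_1, …, a_n distinct nonzero elements of F, and t ∈ ℕ. If U, V ∈ ℕ^n satisfy σ_U(z) ≡ σ_V(z) (mod z^{t+1}) and U ≠ V, then d_as(U,V) := max(|U ∸ V|, |V ∸ U|) ≥ t + 1. -/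
/-!
Cancelling the common factor `σ_{min(U,V)}`, which has constant coefficient `1` and is therefore
coprime to `z`, leaves `σ_{U ∸ V} ≡ σ_{V ∸ U} (mod z^{t+1})`. If both `|U ∸ V|` and `|V ∸ U|`
were at most `t`, the two sides would have degree at most `t`, so they would be equal. But
`σ_X` vanishes at `aᵢ⁻¹` exactly when `xᵢ ≠ 0`, and at a coordinate where `U` and `V` differ
exactly one of `U ∸ V`, `V ∸ U` is nonzero.
-/

open Polynomial

/-- The σ-polynomial `σ_X(z) = Πᵢ (1 - aᵢ z)^{xᵢ}` of `X ∈ ℕⁿ` relative to a family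
`a : Fin n → F` of (distinct, nonzero) field elements. -/
noncomputable def sigmaPoly {F : Type*} [Field F] {n : ℕ} (a : Fin n → F)
    (X : Fin n → ℕ) : Polynomial F :=
  ∏ i, (1 - Polynomial.C (a i) * Polynomial.X) ^ (X i)

lemma sigmaPoly_add {F : Type*} [Field F] {n : ℕ} (a : Fin n → F) (P Q : Fin n → ℕ) :
    sigmaPoly a (fun i => P i + Q i) = sigmaPoly a P * sigmaPoly a Q := by
  simp [sigmaPoly, pow_add, Finset.prod_mul_distrib]

lemma isCoprime_X_sigmaPoly {F : Type*} [Field F] {n : ℕ} (a : Fin n → F) (P : Fin n → ℕ) :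
    IsCoprime (X : F[X]) (sigmaPoly a P) := by
  refine IsCoprime.prod_right fun i _ => IsCoprime.pow_right ⟨C (a i), 1, by ring⟩

lemma natDegree_sigmaPoly_le {F : Type*} [Field F] {n : ℕ} (a : Fin n → F) (P : Fin n → ℕ) :
    (sigmaPoly a P).natDegree ≤ ∑ i, P i := by
  refine (natDegree_prod_le _ _).trans (Finset.sum_le_sum fun i _ => ?_)
  have h : (1 - C (a i) * X : F[X]).natDegree ≤ 1 := by compute_degree
  simpa using natDegree_pow_le_of_le (P i) h

lemma eval_inv_sigmaPoly_eq_zero_iff {F : Type*} [Field F] {n : ℕ} (a : Fin n → F)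
    (hinj : Function.Injective a) (hne : ∀ i, a i ≠ 0) (P : Fin n → ℕ) (i : Fin n) :
    (sigmaPoly a P).eval (a i)⁻¹ = 0 ↔ P i ≠ 0 := by
  simp only [sigmaPoly, eval_prod, Finset.prod_eq_zero_iff, Finset.mem_univ, true_and, eval_pow,
    eval_sub, eval_one, eval_mul, eval_C, eval_X, pow_eq_zero_iff']
  constructor
  · rintro ⟨j, h, hj⟩
    have hji : j = i := hinj ((mul_inv_eq_one₀ (hne i)).1 (sub_eq_zero.1 h).symm)
    rwa [← hji]
  · exact fun h => ⟨i, by simp [hne i], h⟩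

/-- If `a₁, …, aₙ` are distinct nonzero elements of a field `F` and `U ≠ V ∈ ℕⁿ`
satisfy `σ_U(z) ≡ σ_V(z) (mod z^{t+1})`, then the asymmetric `L₁` distance
`d_as(U,V) = max(|U ∸ V|, |V ∸ U|)` is at least `t + 1`. -/
theorem sigma_code_min_asymmetric_distance {F : Type*} [Field F] {n : ℕ} (t : ℕ)
    (a : Fin n → F) (hinj : Function.Injective a) (hne : ∀ i, a i ≠ 0)
    (U V : Fin n → ℕ)
    (hmod : (Polynomial.X : Polynomial F) ^ (t + 1) ∣ (sigmaPoly a U - sigmaPoly a V))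
    (hUV : U ≠ V) :
    t + 1 ≤ max (∑ i, (U i - V i)) (∑ i, (V i - U i)) := by
  have hU : sigmaPoly a U
      = sigmaPoly a (fun i => min (U i) (V i)) * sigmaPoly a (fun i => U i - V i) := by
    rw [← sigmaPoly_add]; congr 1; funext i; omega
  have hV : sigmaPoly a V
      = sigmaPoly a (fun i => min (U i) (V i)) * sigmaPoly a (fun i => V i - U i) := by
    rw [← sigmaPoly_add]; congr 1; funext i; omega
  rw [hU, hV, ← mul_sub] at hmod
  have hdvd := (isCoprime_X_sigmaPoly a _).pow_left.dvd_of_dvd_mul_left hmod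
  by_contra! hlt
  obtain ⟨h1, h2⟩ := max_lt_iff.1 hlt
  have heq : sigmaPoly a (fun i => U i - V i) = sigmaPoly a (fun i => V i - U i) := by
    refine sub_eq_zero.1 (eq_zero_of_dvd_of_natDegree_lt hdvd ?_)
    rw [natDegree_X_pow]
    exact (natDegree_sub_le _ _).trans_lt (max_lt
      ((natDegree_sigmaPoly_le a _).trans_lt h1) ((natDegree_sigmaPoly_le a _).trans_lt h2))
  obtain ⟨i, hi⟩ := Function.ne_iff.1 hUV
  have hiff := eval_inv_sigmaPoly_eq_zero_iff a hinj hne (fun i => U i - V i) i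
  rw [heq, eval_inv_sigmaPoly_eq_zero_iff a hinj hne] at hiff
  omega
end

section
/- Fix n ≥ 1 and w ∈ ℕ. For X̂ ∈ ℕ^{n−1} with |X̂| ≤ w, let X := (X̂, w − |X̂|) ∈ ℕ^n be its parity extension (a vector of L1 weight exactly w). Then for any X̂, Ŷ ∈ ℕ^{n−1} with |X̂| ≤ w and |Ŷ| ≤ w, and X, Y their parity extensions: d_L1(X, Y) = 2·d_as(X̂, Ŷ). Consequently, for t ∈ ℕ, a set of parity-extended vectors has minimum pairwise symmetric L1 distance ≥ 2t+2 if and only if the corresponding set of punctured vectors has minimum pairwise asymmetric L1 distance ≥ t+1. -/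
/-!
Write `a = |X̂ ∸ Ŷ|` and `b = |Ŷ ∸ X̂|`. Since `x + (y ∸ x) = y + (x ∸ y)` in each coordinate,
`|X̂| + b = |Ŷ| + a`, so (both weights being at most `w`) the parity coordinates differ by
`|a - b|`. Hence `d_L1(X, Y) = a + b + |a - b| = 2 * max a b`. The equivalence of the two
minimum-distance conditions follows by halving.
-/

/-- symmetric `L₁` distance `Σᵢ |xᵢ - yᵢ|` on `ℕ^k` -/
def dL1 {k : ℕ} (X Y : Fin k → ℕ) : ℕ := ∑ i, ((X i - Y i) + (Y i - X i))

/-- asymmetric `L₁` distance `max(|X ∸ Y|, |Y ∸ X|)` on `ℕ^k` -/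
def dAs {k : ℕ} (X Y : Fin k → ℕ) : ℕ :=
  max (∑ i, (X i - Y i)) (∑ i, (Y i - X i))

/-- the parity extension of `X̂ ∈ ℕ^m` to a vector of `L₁` weight `w` in `ℕ^{m+1}` -/
def parityExt {m : ℕ} (w : ℕ) (X : Fin m → ℕ) : Fin (m + 1) → ℕ :=
  Fin.snoc X (w - ∑ i, X i)

theorem dL1_parityExt {m w : ℕ} (X Y : Fin m → ℕ) (hX : ∑ i, X i ≤ w) (hY : ∑ i, Y i ≤ w) :
    dL1 (parityExt w X) (parityExt w Y) = 2 * dAs X Y := by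
  have hbal : ∑ i, X i + ∑ i, (Y i - X i) = ∑ i, Y i + ∑ i, (X i - Y i) := by
    rw [← Finset.sum_add_distrib, ← Finset.sum_add_distrib]
    exact Finset.sum_congr rfl fun i _ => by omega
  simp only [dL1, dAs, parityExt, Fin.sum_univ_castSucc, Fin.snoc_castSucc, Fin.snoc_last,
    Finset.sum_add_distrib]
  omega

/-- Fix a length `m + 1 ≥ 1` and `w ∈ ℕ`.  For parity extensions `X, Y` of
`X̂, Ŷ ∈ ℕ^m` of weight `≤ w`:  `d_L1(X,Y) = 2·d_as(X̂,Ŷ)`.  Consequently a set of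
parity-extended vectors has minimum pairwise symmetric `L₁` distance `≥ 2t+2` iff
the corresponding punctured set has minimum pairwise asymmetric `L₁` distance `≥ t+1`. -/
theorem parityExt_dist (m w t : ℕ) :
    (∀ X Y : Fin m → ℕ, (∑ i, X i) ≤ w → (∑ i, Y i) ≤ w →
        dL1 (parityExt w X) (parityExt w Y) = 2 * dAs X Y) ∧
    (∀ S : Set (Fin m → ℕ), (∀ X ∈ S, (∑ i, X i) ≤ w) →
        ((∀ X ∈ S, ∀ Y ∈ S, X ≠ Y → 2 * t + 2 ≤ dL1 (parityExt w X) (parityExt w Y)) ↔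
         (∀ X ∈ S, ∀ Y ∈ S, X ≠ Y → t + 1 ≤ dAs X Y))) := by
  refine ⟨fun X Y => dL1_parityExt X Y, fun S hS => ?_⟩
  refine forall₄_congr fun X hX Y hY => imp_congr_right fun _ => ?_
  rw [dL1_parityExt X Y (hS X hX) (hS Y hY)]
  omega
end

section
/- Let n, w, t ∈ ℕ with w ≤ n, and let F be a finite field with |F| > w. Then there exists a set A of binary words of length n, all of Hamming weight w, such that |A| ≥ ⌈C(n,w) / |F|^t⌉ and d_id(X,Y) ≥ 2t + 2 for all distinct X, Y ∈ A (i.e., A is a constant-weight code correcting t deletions/insertions of 0's). Here C(n,w) is the binomial coefficient. -/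
open Polynomial

/-- The multiset containing, for each `0` of the word, `k` plus the number of `1`'s to its left. -/
def zeroRuns : ℕ → List Bool → Multiset ℕ
  | _, [] => 0
  | k, false :: l => k ::ₘ zeroRuns k l
  | k, true :: l => zeroRuns (k + 1) l

lemma zeroRuns_bounds (l : List Bool) :
    ∀ k, ∀ i ∈ zeroRuns k l, k ≤ i ∧ i ≤ k + l.count true := by
  induction l with
  | nil => intro k i hi; simp [zeroRuns] at hi
  | cons b l ih =>
    intro k i hi
    cases b with
    | false =>
      simp only [zeroRuns, Multiset.mem_cons] at hi
      rcases hi with rfl | hi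
      · simp
      · simpa using ih k i hi
    | true =>
      have := ih (k + 1) i hi
      simp only [List.count_cons_self]
      omega

lemma card_zeroRuns (l : List Bool) :
    ∀ k, (zeroRuns k l).card + l.count true = l.length := by
  induction l with
  | nil => intro k; simp [zeroRuns]
  | cons b l ih =>
    intro k
    cases b with
    | false => have := ih k; simp [zeroRuns]; omega
    | true => have := ih (k + 1); simp [zeroRuns]; omega

lemma zeroRuns_inj (X : List Bool) : ∀ (k : ℕ) (Y : List Bool),
    zeroRuns k X = zeroRuns k Y → X.count true = Y.count true → X = Y := by
  -- Words with different first letters are told apart by whether `k` belongs to the multiset.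
  have key : ∀ (k : ℕ) (l : List Bool), k ∉ zeroRuns (k + 1) l := by
    intro k l h
    have := (zeroRuns_bounds l (k + 1) k h).1
    omega
  induction X with
  | nil =>
    intro k Y h hc
    rcases Y with _ | ⟨_ | _, Y⟩
    · rfl
    · simp [zeroRuns] at h
    · simp at hc
  | cons b X ih =>
    intro k Y h hc
    cases b with
    | false =>
      rcases Y with _ | ⟨_ | _, Y⟩
      · simp [zeroRuns] at h
      · rw [ih k Y (by simpa [zeroRuns] using h) (by simpa using hc)]
      · simp only [zeroRuns] at h
        exact absurd (h ▸ Multiset.mem_cons_self _ _) (key k Y)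
    | true =>
      rcases Y with _ | ⟨_ | _, Y⟩
      · simp at hc
      · simp only [zeroRuns] at h
        exact absurd (h ▸ Multiset.mem_cons_self _ _) (key k X)
      · rw [ih (k + 1) Y (by simpa [zeroRuns] using h) (by simpa using hc)]

lemma zeroRuns_insert (A B : List Bool) :
    ∀ k, ∃ i, zeroRuns k (A ++ false :: B) = i ::ₘ zeroRuns k (A ++ B) := by
  induction A with
  | nil => intro k; exact ⟨k, rfl⟩
  | cons b A ih =>
    intro k
    cases b with
    | false =>
      obtain ⟨i, hi⟩ := ih k
      exact ⟨i, by simp only [List.cons_append, zeroRuns, hi, Multiset.cons_swap]⟩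
    | true => exact ih (k + 1)

/-- A chain of `k` steps changes the multiset of a word by at most `k` elements in total. -/
lemma ZeroChain.exists_add (k : ℕ) : ∀ X Y : List Bool, ZeroChain k X Y →
    ∃ P N : Multiset ℕ, zeroRuns 0 X + N = zeroRuns 0 Y + P ∧ P.card + N.card ≤ k := by
  induction k with
  | zero =>
    rintro X Y rfl
    exact ⟨0, 0, rfl, by simp⟩
  | succ k ih =>
    rintro X Y ⟨Z, hs, hc⟩
    obtain ⟨P, N, h, hk⟩ := ih Z Y hc
    rcases hs with ⟨A, B, rfl, rfl⟩ | ⟨A, B, rfl, rfl⟩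
    · obtain ⟨i, hi⟩ := zeroRuns_insert A B 0
      refine ⟨i ::ₘ P, N, ?_, by simp; omega⟩
      rw [hi, Multiset.cons_add, h, Multiset.add_cons]
    · obtain ⟨i, hi⟩ := zeroRuns_insert A B 0
      refine ⟨P, i ::ₘ N, ?_, by simp; omega⟩
      rw [← h, hi, Multiset.cons_add, Multiset.add_cons]

/-- The monic polynomial with root multiset `e(M)`. -/
noncomputable def rootPoly {F : Type*} [Field F] (e : ℕ → F) (M : Multiset ℕ) : F[X] :=
  ((M.map e).map fun a => X - C a).prod

section rootPoly

variable {F : Type*} [Field F] (e : ℕ → F)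

lemma rootPoly_monic (M : Multiset ℕ) : (rootPoly e M).Monic :=
  monic_multiset_prod_of_monic _ _ fun a _ => monic_X_sub_C a

lemma rootPoly_natDegree (M : Multiset ℕ) : (rootPoly e M).natDegree = M.card := by
  rw [rootPoly, natDegree_multiset_prod_X_sub_C_eq_card, Multiset.card_map]

lemma rootPoly_add (M N : Multiset ℕ) :
    rootPoly e (M + N) = rootPoly e M * rootPoly e N := by
  simp [rootPoly]

/-- The degree argument: agreement of the top `t` coefficients below the leading one, together
with a difference of size at most `2t + 1`, forces the two polynomials to coincide. -/
lemma rootPoly_eq_of_coeff_eq {M M' P N : Multiset ℕ} {m t : ℕ}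
    (hM : M.card = m) (hM' : M'.card = m) (h : M + N = M' + P)
    (ht : P.card + N.card < 2 * t + 2)
    (hc : ∀ i < t, (rootPoly e M).coeff (m - 1 - i) = (rootPoly e M').coeff (m - 1 - i)) :
    rootPoly e M = rootPoly e M' := by
  have hcard := congrArg Multiset.card h
  simp only [Multiset.card_add] at hcard
  have hmul := congrArg (rootPoly e) h
  rw [rootPoly_add, rootPoly_add] at hmul
  by_contra hne
  have hD : rootPoly e M - rootPoly e M' ≠ 0 := sub_ne_zero.2 hne
  have hdM := rootPoly_natDegree e M
  have hdM' := rootPoly_natDegree e M'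
  have hdeg : (rootPoly e M - rootPoly e M').natDegree + t < m := by
    by_contra hlt
    apply hD
    rw [← leadingCoeff_eq_zero, leadingCoeff]
    generalize hd : (rootPoly e M - rootPoly e M').natDegree = d at hlt
    rw [coeff_sub, sub_eq_zero]
    rcases lt_trichotomy d m with hdm | hdm | hdm
    · have := hc (m - 1 - d) (by omega)
      rwa [show m - 1 - (m - 1 - d) = d by omega] at this
    · have h1 := (rootPoly_monic e M).coeff_natDegree
      have h2 := (rootPoly_monic e M').coeff_natDegree
      rw [hdM, hM] at h1
      rw [hdM', hM'] at h2
      rw [hdm, h1, h2]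
    · rw [coeff_eq_zero_of_natDegree_lt (by omega), coeff_eq_zero_of_natDegree_lt (by omega)]
  have heq : (rootPoly e M - rootPoly e M') * rootPoly e N
      = rootPoly e M' * (rootPoly e P - rootPoly e N) := by
    linear_combination hmul
  have hN0 := (rootPoly_monic e N).ne_zero
  have hne0 : rootPoly e P - rootPoly e N ≠ 0 := by
    intro h0
    rw [h0, mul_zero] at heq
    exact mul_ne_zero hD hN0 heq
  have hdeg2 := congrArg natDegree heq
  rw [natDegree_mul hD hN0, natDegree_mul (rootPoly_monic e M').ne_zero hne0,
    rootPoly_natDegree, rootPoly_natDegree] at hdeg2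
  omega

lemma rootPoly_inj {w : ℕ} (he : Set.InjOn e (Set.Iic w)) {M M' : Multiset ℕ}
    (hM : ∀ i ∈ M, i ≤ w) (hM' : ∀ i ∈ M', i ≤ w) (h : rootPoly e M = rootPoly e M') :
    M = M' := by
  have h2 := congrArg roots h
  rw [rootPoly, rootPoly, roots_multiset_prod_X_sub_C, roots_multiset_prod_X_sub_C] at h2
  have inv : ∀ K : Multiset ℕ, (∀ i ∈ K, i ≤ w) →
      (K.map e).map (Function.invFunOn e (Set.Iic w)) = K := by
    intro K hK
    rw [Multiset.map_map]
    conv_rhs => rw [← Multiset.map_id K]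
    refine Multiset.map_congr rfl fun i hi => ?_
    exact he.leftInvOn_invFunOn (hK i hi)
  rw [← inv M hM, h2, inv M' hM']

end rootPoly

lemma exists_words (n : ℕ) : ∀ w : ℕ, ∃ S : Finset (List Bool),
    (∀ X ∈ S, X.length = n ∧ X.count true = w) ∧ n.choose w = S.card := by
  induction n with
  | zero =>
    intro w
    cases w with
    | zero => exact ⟨{[]}, by simp, by simp⟩
    | succ w => exact ⟨∅, by simp, by simp⟩
  | succ n ih =>
    intro w
    have hinj : ∀ b : Bool, Function.Injective (List.cons b) := fun b => List.cons_injective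
    cases w with
    | zero =>
      obtain ⟨S, hS, hc⟩ := ih 0
      refine ⟨S.map ⟨_, hinj false⟩, ?_, by simpa using hc⟩
      intro X hX
      obtain ⟨Y, hY, rfl⟩ := Finset.mem_map.1 hX
      simpa using hS Y hY
    | succ w =>
      obtain ⟨S, hS, hc⟩ := ih w
      obtain ⟨T, hT, hd⟩ := ih (w + 1)
      refine ⟨(S.map ⟨_, hinj true⟩).disjUnion (T.map ⟨_, hinj false⟩) ?_, ?_, ?_⟩
      · rw [Finset.disjoint_left]
        intro X hX hX'
        obtain ⟨Y, -, rfl⟩ := Finset.mem_map.1 hX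
        obtain ⟨Z, -, hZ⟩ := Finset.mem_map.1 hX'
        simp at hZ
      · intro X hX
        rcases Finset.mem_disjUnion.1 hX with hX | hX
        · obtain ⟨Y, hY, rfl⟩ := Finset.mem_map.1 hX
          simpa using hS Y hY
        · obtain ⟨Y, hY, rfl⟩ := Finset.mem_map.1 hX
          simpa using hT Y hY
      · rw [Finset.card_disjUnion, Finset.card_map, Finset.card_map, ← hc, ← hd,
          Nat.choose_succ_succ]

/-- Lower bound for constant-weight `t`-Sy0EC codes: for `w ≤ n` and a finite field
`F` with `|F| > w`, there is a set `A` of binary words of length `n` and Hamming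
weight `w` with `|A| ≥ ⌈C(n,w) / |F|^t⌉` whose distinct elements are at pairwise
`d_id`-distance `≥ 2t + 2`. -/
theorem exists_constant_weight_sy0ec_code (n w t : ℕ) (hw : w ≤ n)
    (F : Type*) [Field F] [Fintype F] (hF : w < Fintype.card F) :
    ∃ A : Finset (List Bool),
      (∀ X ∈ A, X.length = n ∧ X.count true = w) ∧
      (∀ X ∈ A, ∀ Y ∈ A, X ≠ Y → ((2 * t + 2 : ℕ) : ℕ∞) ≤ dId X Y) ∧
      n.choose w ⌈/⌉ Fintype.card F ^ t ≤ A.card := by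
  classical
  obtain ⟨e, he⟩ : ∃ e : ℕ → F, Set.InjOn e (Set.Iic w) := by
    let f := (Fintype.equivFin F).symm
    refine ⟨fun i => if h : i < Fintype.card F then f ⟨i, h⟩ else 0, ?_⟩
    intro i hi j hj hij
    have hi' : i < Fintype.card F := lt_of_le_of_lt hi hF
    have hj' : j < Fintype.card F := lt_of_le_of_lt hj hF
    simpa [hi', hj'] using hij
  obtain ⟨S, hS, hcard⟩ := exists_words n w
  -- For `i ≥ n - w` the index is truncated to `0`; such entries only repeat information.
  let syn : List Bool → (Fin t → F) := fun X i =>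
    (rootPoly e (zeroRuns 0 X)).coeff (n - w - 1 - i)
  have hq : 0 < Fintype.card F ^ t := pow_pos (by omega) _
  obtain ⟨y, hy⟩ : ∃ y, n.choose w ⌈/⌉ Fintype.card F ^ t ≤ (S.filter (syn · = y)).card := by
    rcases Nat.eq_zero_or_eq_succ_pred (n.choose w ⌈/⌉ Fintype.card F ^ t) with h0 | h0
    · exact ⟨0, by rw [h0]; exact Nat.zero_le _⟩
    · set d := (n.choose w ⌈/⌉ Fintype.card F ^ t).pred
      have hlt : Fintype.card F ^ t * d < S.card := by
        rw [← hcard]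
        by_contra hle
        have := (ceilDiv_le_iff_le_mul hq).2 (not_lt.1 hle)
        omega
      obtain ⟨y, -, hy⟩ := Finset.exists_lt_card_fiber_of_mul_lt_card_of_maps_to
        (s := S) (t := Finset.univ) (f := syn) (n := d) (fun _ _ => Finset.mem_univ _)
        (by simpa using hlt)
      exact ⟨y, by rw [h0]; exact hy⟩
  refine ⟨S.filter (syn · = y), fun X hX => hS X (Finset.mem_filter.1 hX).1, ?_, hy⟩
  intro X hX Y hY hne
  rw [Finset.mem_filter] at hX hY
  obtain ⟨hXl, hXc⟩ := hS X hX.1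
  obtain ⟨hYl, hYc⟩ := hS Y hY.1
  refine le_sInf ?_
  rintro _ ⟨k, rfl, hk⟩
  rw [Nat.cast_le]
  by_contra hlt
  obtain ⟨P, N, hPN, hPNk⟩ := ZeroChain.exists_add k X Y hk
  have hcX := card_zeroRuns X 0
  have hcY := card_zeroRuns Y 0
  have hG := rootPoly_eq_of_coeff_eq e (m := n - w) (t := t) (by omega) (by omega) hPN (by omega)
    (fun i hi => congrFun (hX.2.trans hY.2.symm) ⟨i, hi⟩)
  have hM := rootPoly_inj e he
    (fun i hi => by have := (zeroRuns_bounds X 0 i hi).2; omega)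
    (fun i hi => by have := (zeroRuns_bounds Y 0 i hi).2; omega) hG
  exact hne (zeroRuns_inj X 0 Y hM (hXc.trans hYc.symm))
end

section
/- For all n, w ∈ ℕ with 1 ≤ w ≤ n − 1: log₂ C(n,w) > n·h(w/n) + (1/2)·log₂ n + (log₂ e)/(12n+1) − (1/2)·[ log₂(2π·w·(n−w)) + (log₂ e)/(6w) + (log₂ e)/(6(n−w)) ], where C(n,w) is the binomial coefficient. -/
/-!
Robbins' refinement of Stirling's formula gives, for `n ≥ 1`,
`log √π + 1 / (12 n + 1) < log (stirlingSeq n) ≤ log √π + 1 / (12 n)`,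
where `stirlingSeq n = n! / (√(2n) (n/e)^n)` tends to `√π`. Both sides hold because the corrected
sequences `log (stirlingSeq n) - 1 / (12 n + 1)` and `log (stirlingSeq n) - 1 / (12 n)` converge
monotonically to `log √π`, the first decreasing strictly (`robbins_step_lower`), the second
increasing (`Stirling.log_stirlingSeq_sdiff_le`). Applying the lower bound to `n!` and the upper
bound to `w!` and `(n-w)!` in `C(n,w) = n! / (w! (n-w)!)` yields the claim in natural logarithms,
and dividing by `log 2` gives the base-2 form.
-/

/-- the binary entropy function `h(x) = -x log₂ x - (1-x) log₂(1-x)` -/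
noncomputable def binEnt (x : ℝ) : ℝ :=
  -(x * Real.logb 2 x + (1 - x) * Real.logb 2 (1 - x))

/-- The consecutive difference is `∑ r^k / (2k+1)` over `k ≥ 1` with `r = (2n+1)⁻²`; since
`2k+1 ≤ 3^k` it dominates the geometric series `∑ (r/3)^k = 1 / (12 n² + 12 n + 2)`. Here
`n = m + 1`. -/
lemma robbins_step_lower (m : ℕ) :
    1 / (12 * ((m : ℝ) + 1) + 1) - 1 / (12 * ((m : ℝ) + 2) + 1) <
      Real.log (Stirling.stirlingSeq (m + 1)) - Real.log (Stirling.stirlingSeq (m + 2)) := by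
  set r : ℝ := ((1 : ℝ) / (2 * ↑(m + 1) + 1)) ^ 2 with hr
  have hm : (0 : ℝ) ≤ m := Nat.cast_nonneg m
  have hr0 : 0 ≤ r := by positivity
  have hr1 : r ≤ 1 := by
    rw [hr]
    apply pow_le_one₀ (by positivity)
    rw [div_le_one (by positivity)]
    push_cast
    linarith
  have hgeo := (hasSum_geometric_of_lt_one (r := r / 3) (by positivity)
    (by linarith)).mul_left (r / 3)
  have hle := hasSum_le (fun k : ℕ => ?_) hgeo (Stirling.log_stirlingSeq_sdiff_hasSum m)
  · refine lt_of_lt_of_le ?_ hle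
    have hval : r / 3 * (1 - r / 3)⁻¹ = 1 / (3 * (2 * (m : ℝ) + 3) ^ 2 - 1) := by
      have hr' : r = 1 / (2 * (m : ℝ) + 3) ^ 2 := by
        rw [hr, div_pow, one_pow]
        push_cast
        ring_nf
      have h1 : 0 < 3 * (2 * (m : ℝ) + 3) ^ 2 - 1 := by nlinarith
      have h2 : (1 : ℝ) - 1 / (2 * (m : ℝ) + 3) ^ 2 / 3 =
          (3 * (2 * (m : ℝ) + 3) ^ 2 - 1) / (3 * (2 * (m : ℝ) + 3) ^ 2) := by
        field_simp
      rw [hr', h2, inv_div]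
      field_simp
    rw [hval, div_sub_div _ _ (by positivity) (by positivity),
      div_lt_div_iff₀ (by positivity) (by nlinarith)]
    nlinarith
  · have h3 : (2 * ((k + 1 : ℕ) : ℝ) + 1) ≤ 3 ^ (k + 1) := by
      have := one_add_mul_le_pow (a := (2 : ℝ)) (by norm_num) (k + 1)
      norm_num at this ⊢
      linarith
    rw [← pow_succ', div_pow, div_eq_mul_one_div, mul_comm]
    exact mul_le_mul_of_nonneg_right
      (one_div_le_one_div_of_le (by positivity) h3) (by positivity)

lemma tendsto_log_stirlingSeq_succ :
    Filter.Tendsto (fun m : ℕ => Real.log (Stirling.stirlingSeq (m + 1))) Filter.atTop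
      (nhds (Real.log (√Real.pi))) :=
  ((Stirling.tendsto_stirlingSeq_sqrt_pi.comp (Filter.tendsto_add_atTop_nat 1)).log
    (by positivity))

lemma tendsto_one_div_twelve_mul_add (c : ℝ) :
    Filter.Tendsto (fun m : ℕ => 1 / (12 * ((m : ℝ) + 1) + c)) Filter.atTop (nhds 0) := by
  simp only [one_div]
  apply Filter.Tendsto.inv_tendsto_atTop
  apply Filter.tendsto_atTop_add_const_right
  apply Filter.Tendsto.const_mul_atTop (by norm_num)
  exact Filter.tendsto_atTop_add_const_right _ _ tendsto_natCast_atTop_atTop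

lemma log_stirlingSeq_upper {n : ℕ} (hn : 1 ≤ n) :
    Real.log (Stirling.stirlingSeq n) ≤ Real.log (√Real.pi) + 1 / (12 * n) := by
  obtain ⟨m, rfl⟩ := Nat.exists_eq_add_of_le' hn
  have hmono : Monotone (fun m : ℕ =>
      Real.log (Stirling.stirlingSeq (m + 1)) - 1 / (12 * ((m : ℝ) + 1) + 0)) := by
    refine monotone_nat_of_le_succ fun k => ?_
    have h := Stirling.log_stirlingSeq_sdiff_le (k + 1)
    have e : (1 : ℝ) / (12 * ((k + 1 : ℕ) : ℝ) * (((k + 1 : ℕ) : ℝ) + 1)) =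
        1 / (12 * ((k : ℝ) + 1) + 0) - 1 / (12 * (((k + 1 : ℕ) : ℝ) + 1) + 0) := by
      push_cast
      field_simp
      ring
    rw [e] at h
    linarith
  have h := hmono.ge_of_tendsto
    (tendsto_log_stirlingSeq_succ.sub (tendsto_one_div_twelve_mul_add 0)) m
  simp only [add_zero, sub_zero] at h
  push_cast
  linarith

lemma log_stirlingSeq_lower {n : ℕ} (hn : 1 ≤ n) :
    Real.log (√Real.pi) + 1 / (12 * n + 1) < Real.log (Stirling.stirlingSeq n) := by
  obtain ⟨m, rfl⟩ := Nat.exists_eq_add_of_le' hn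
  have hstep (k : ℕ) : 1 / (12 * ((k : ℝ) + 1) + 1) - 1 / (12 * (((k + 1 : ℕ) : ℝ) + 1) + 1) <
      Real.log (Stirling.stirlingSeq (k + 1)) - Real.log (Stirling.stirlingSeq (k + 1 + 1)) := by
    have h := robbins_step_lower k
    have e : ((k + 1 : ℕ) : ℝ) + 1 = k + 2 := by push_cast; ring
    rwa [e]
  have hanti : Antitone (fun m : ℕ =>
      Real.log (Stirling.stirlingSeq (m + 1)) - 1 / (12 * ((m : ℝ) + 1) + 1)) :=
    antitone_nat_of_succ_le fun k => by linarith [hstep k]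
  -- The limit bounds the term of index `m + 1` weakly; one strict step back to `m` is then gained.
  have h := hanti.le_of_tendsto
    (tendsto_log_stirlingSeq_succ.sub (tendsto_one_div_twelve_mul_add 1)) (m + 1)
  have hs := hstep m
  simp only [sub_zero] at h
  rw [Nat.cast_succ m]
  linarith

/-- Natural-logarithm form of the bound, with `n = w + v`. -/
lemma log_choose_lower {w v : ℕ} (hw : 1 ≤ w) (hv : 1 ≤ v) :
    ((w : ℝ) + v) * Real.log (w + v) - w * Real.log w - v * Real.log v +
        Real.log (w + v) / 2 + 1 / (12 * ((w : ℝ) + v) + 1) -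
        (Real.log 2 + Real.log Real.pi + Real.log w + Real.log v) / 2 -
        1 / (12 * w) - 1 / (12 * v) < Real.log ((w + v).choose w) := by
  have hw0 : (0 : ℝ) < w := by exact_mod_cast hw
  have hv0 : (0 : ℝ) < v := by exact_mod_cast hv
  have hfac : Real.log ((w + v).factorial : ℝ) = Real.log ((w + v).choose w) +
      Real.log (w.factorial : ℝ) + Real.log (v.factorial : ℝ) := by
    rw [← Nat.add_choose_mul_factorial_mul_factorial w v, ← Nat.choose_symm_add]
    have hc : ((w + v).choose w : ℝ) ≠ 0 := by
      exact_mod_cast (Nat.choose_pos (Nat.le_add_right w v)).ne'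
    push_cast
    rw [Real.log_mul (mul_ne_zero hc (by positivity)) (by positivity), Real.log_mul hc (by positivity)]
  have hn := log_stirlingSeq_lower (n := w + v) (by omega)
  have hwu := log_stirlingSeq_upper hw
  have hvu := log_stirlingSeq_upper hv
  rw [Stirling.log_stirlingSeq_formula, Real.log_sqrt Real.pi_pos.le] at hn hwu hvu
  push_cast at hn
  rw [Real.log_mul (by norm_num) (by positivity), Real.log_div (by positivity) (by positivity),
    Real.log_exp] at hn hwu hvu
  linarith

/-- A sharpened entropy lower bound on binomial coefficients: for `1 ≤ w ≤ n - 1`,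
`log₂ C(n,w) > n·h(w/n) + (1/2)·log₂ n + (log₂ e)/(12n+1)
  - (1/2)·[log₂(2π·w·(n-w)) + (log₂ e)/(6w) + (log₂ e)/(6(n-w))]`. -/
theorem log2_choose_lower_bound (n w : ℕ) (h1 : 1 ≤ w) (h2 : w ≤ n - 1) :
    Real.logb 2 (n.choose w) >
      n * binEnt ((w : ℝ) / n) + (1 / 2) * Real.logb 2 n +
        Real.logb 2 (Real.exp 1) / (12 * n + 1) -
        (1 / 2) * (Real.logb 2 (2 * Real.pi * w * ((n : ℝ) - w)) +
          Real.logb 2 (Real.exp 1) / (6 * w) +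
          Real.logb 2 (Real.exp 1) / (6 * ((n : ℝ) - w))) := by
  obtain ⟨v, rfl⟩ : ∃ v, n = w + v := ⟨n - w, by omega⟩
  have hv : 1 ≤ v := by omega
  have hw0 : (0 : ℝ) < w := by exact_mod_cast h1
  have hv0 : (0 : ℝ) < v := by exact_mod_cast hv
  have hl2 : 0 < Real.log 2 := Real.log_pos (by norm_num)
  have key := div_lt_div_of_pos_right (log_choose_lower h1 hv) hl2
  refine lt_of_eq_of_lt ?_ key
  have e1 : (1 : ℝ) - w / (w + v) = v / (w + v) := by field_simp; ring
  have e2 : (w : ℝ) + v - w = v := by ring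
  have hnz : (w : ℝ) + v ≠ 0 := by positivity
  push_cast
  simp only [binEnt, Real.logb, e1, e2, Real.log_exp]
  rw [Real.log_div hw0.ne' hnz, Real.log_div hv0.ne' hnz,
    Real.log_mul (by positivity) hv0.ne', Real.log_mul (by positivity) hw0.ne',
    Real.log_mul (by norm_num) Real.pi_pos.ne']
  field_simp
  ring
end

section
/- For all integers n ≥ 1 and t ≥ 1: n ≤ log₂(⌈C(n, ⌈n/2⌉) / n^{t−1}⌉) + t·log₂ n − (1/2)·log₂ n + 1.17657, where C(n,w) is the binomial coefficient. -/
/-!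
Rounding up gives `C(n, ⌈n/2⌉) ≤ ⌈C(n, ⌈n/2⌉) / n^(t-1)⌉ * n^(t-1)`, so after taking logarithms the
claim no longer depends on `t`: it reduces to `n ≤ log₂ C(n, ⌈n/2⌉) + (1/2) log₂ n + c`. This holds
already with `c = 1` (equality at `n = 1`), in the form `4 ^ n ≤ 4 * n * C(n, ⌈n/2⌉) ^ 2`
(`four_pow_le_mul_middle_choose_sq`), which follows from the Wallis-type bound
`16 ^ m ≤ 4 * m * C(2m, m) ^ 2` (`sixteen_pow_le_mul_centralBinom_sq`), proved by induction.
-/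

theorem sixteen_pow_le_mul_centralBinom_sq (m : ℕ) (hm : 1 ≤ m) :
    16 ^ m ≤ 4 * m * m.centralBinom ^ 2 := by
  induction m, hm using Nat.le_induction with
  | base => decide
  | succ m hm ih =>
    have h := Nat.succ_mul_centralBinom_succ m
    refine Nat.le_of_mul_le_mul_left ?_ (Nat.succ_pos m)
    calc (m + 1) * 16 ^ (m + 1) = 16 * (m + 1) * 16 ^ m := by ring
      _ ≤ 16 * (m + 1) * (4 * m * m.centralBinom ^ 2) := Nat.mul_le_mul_left _ ih
      _ = 16 * (4 * m * (m + 1)) * m.centralBinom ^ 2 := by ring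
      _ ≤ 16 * (2 * m + 1) ^ 2 * m.centralBinom ^ 2 := by
        gcongr
        nlinarith
      _ = 4 * (2 * (2 * m + 1) * m.centralBinom) ^ 2 := by ring
      _ = 4 * ((m + 1) * (m + 1).centralBinom) ^ 2 := by rw [h]
      _ = (m + 1) * (4 * (m + 1) * (m + 1).centralBinom ^ 2) := by ring

/-- For odd `n = 2m + 1` the middle coefficient is half of the central binomial coefficient
`C(2m + 2, m + 1)`, so both parities reduce to central binomial coefficients. -/
theorem four_pow_le_mul_middle_choose_sq (n : ℕ) (hn : 1 ≤ n) :
    4 ^ n ≤ 4 * n * n.choose ((n + 1) / 2) ^ 2 := by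
  obtain ⟨m, rfl | rfl⟩ := Nat.even_or_odd' n
  · have h := sixteen_pow_le_mul_centralBinom_sq m (by omega)
    rw [show (2 * m + 1) / 2 = m by omega, ← Nat.centralBinom_eq_two_mul_choose, pow_mul]
    norm_num
    nlinarith
  · have h := sixteen_pow_le_mul_centralBinom_sq (m + 1) (by omega)
    have hc : (m + 1).centralBinom = 2 * (2 * m + 1).choose (m + 1) := by
      rw [Nat.centralBinom_eq_two_mul_choose, show 2 * (m + 1) = (2 * m + 1) + 1 by ring,
        Nat.choose_succ_succ, Nat.choose_symm_half]
      ring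
    rw [show (2 * m + 1 + 1) / 2 = m + 1 by omega]
    rw [hc] at h
    have hp : (16 : ℕ) ^ (m + 1) = 4 * 4 ^ (2 * m + 1) := by
      rw [show (16 : ℕ) = 4 ^ 2 by norm_num, ← pow_mul]
      ring
    rw [hp] at h
    nlinarith [Nat.zero_le (m * (2 * m + 1).choose (m + 1) ^ 2)]

/-- Length bound for the balanced `t`-Sy0EC σ-codes: for all `n ≥ 1` and `t ≥ 1`,
`n ≤ log₂ ⌈C(n, ⌈n/2⌉) / n^{t-1}⌉ + t·log₂ n - (1/2)·log₂ n + 1.17657`. -/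
theorem balanced_code_length_bound (n t : ℕ) (hn : 1 ≤ n) (ht : 1 ≤ t) :
    (n : ℝ) ≤
      Real.logb 2 ((n.choose ((n + 1) / 2) ⌈/⌉ n ^ (t - 1) : ℕ) : ℝ) +
        t * Real.logb 2 n - (1 / 2) * Real.logb 2 n + 1.17657 := by
  have hmid := four_pow_le_mul_middle_choose_sq n hn
  have hCpos : 0 < n.choose ((n + 1) / 2) := Nat.choose_pos (by omega)
  set C := n.choose ((n + 1) / 2)
  have hpow : 0 < n ^ (t - 1) := by positivity
  have hceil : C ≤ n ^ (t - 1) * (C ⌈/⌉ n ^ (t - 1)) := by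
    simpa using le_smul_ceilDiv (b := C) hpow
  set K := C ⌈/⌉ n ^ (t - 1)
  have hKpos : 0 < K := Nat.pos_of_mul_pos_left (hCpos.trans_le hceil)
  have hn0 : (n : ℝ) ≠ 0 := by positivity
  have hC0 : (C : ℝ) ≠ 0 := by positivity
  have hK0 : (K : ℝ) ≠ 0 := by positivity
  have hlogC : Real.logb 2 C ≤ ((t : ℝ) - 1) * Real.logb 2 n + Real.logb 2 K := by
    have h : (C : ℝ) ≤ (n : ℝ) ^ (t - 1) * K := by exact_mod_cast hceil
    have h2 := Real.logb_le_logb_of_le (b := 2) (by norm_num) (by positivity) h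
    rwa [Real.logb_mul (by positivity) hK0, Real.logb_pow, Nat.cast_sub ht, Nat.cast_one] at h2
  have hlogmid : 2 * (n : ℝ) ≤ 2 + Real.logb 2 n + 2 * Real.logb 2 C := by
    have h : (2 : ℝ) ^ (2 * n) ≤ 2 ^ 2 * n * (C : ℝ) ^ 2 := by
      rw [pow_mul]
      norm_num
      exact_mod_cast hmid
    have h2 := Real.logb_le_logb_of_le (b := 2) (by norm_num) (by positivity) h
    rw [Real.logb_mul (by positivity) (by positivity), Real.logb_mul (by positivity) hn0,
      Real.logb_pow, Real.logb_pow, Real.logb_pow, Real.logb_self_eq_one (by norm_num)] at h2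
    push_cast at h2
    linarith
  linarith
end
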